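/- The automorphism group of the graph Π_I has cardinality at most 60. -/

import Mathlib

/-- The ten faces of the hemi-icosahedron on vertex set `Fin 6`. -/
def faces : Finset (Finset (Fin 6)) :=
  {{0,1,2}, {0,2,3}, {0,3,4}, {0,4,5}, {0,5,1}, {1,2,4}, {2,3,5}, {1,3,4}, {2,4,5}, {1,3,5}}

/-- The 16-element vertex set: `Fin 6` together with the ten faces. -/
abbrev V16 := Fin 6 ⊕ {f : Finset (Fin 6) // f ∈ faces}

/-- Vertex-face incidence: `v : Fin 6` is incident to a face `f` iff `v ∈ f`. -/
def piRel : V16 → V16 → Prop := fun a b =>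
  match a, b with
  | Sum.inl v, Sum.inr f => v ∈ f.1
  | _, _ => False

instance : DecidableRel piRel := fun a b =>
  match a, b with
  | Sum.inl v, Sum.inr f => inferInstanceAs (Decidable (v ∈ f.1))
  | Sum.inl _, Sum.inl _ => Decidable.isFalse id
  | Sum.inr _, Sum.inl _ => Decidable.isFalse id
  | Sum.inr _, Sum.inr _ => Decidable.isFalse id

/-- `Π_I`, the projective vertex-face graph of the icosahedron (vertex-face graph of
the hemi-icosahedron): `v : Fin 6` is adjacent to `f ∈ faces` iff `v ∈ f`. -/
def piI : SimpleGraph V16 := SimpleGraph.fromRel piRel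

instance : DecidableRel piI.Adj := fun a b =>
  decidable_of_iff _ (SimpleGraph.fromRel_adj piRel a b).symm

theorem aux_deg_inl : ∀ v : Fin 6, piI.degree (Sum.inl v) = 5 := by decide +kernel

theorem aux_deg_inr : ∀ f : {f : Finset (Fin 6) // f ∈ faces}, piI.degree (Sum.inr f) = 3 := by
  decide +kernel

theorem aux_adj (v : Fin 6) (f : {f : Finset (Fin 6) // f ∈ faces}) :
    piI.Adj (Sum.inl v) (Sum.inr f) ↔ v ∈ f.1 := by
  simp [piI, SimpleGraph.fromRel_adj, piRel]

theorem aux_inl (e : piI ≃g piI) (v : Fin 6) : ∃ w : Fin 6, e (Sum.inl v) = Sum.inl w := by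
  have h := e.degree_eq (Sum.inl v)
  rcases hx : e (Sum.inl v) with w | g
  · exact ⟨w, rfl⟩
  · rw [hx, aux_deg_inl, aux_deg_inr] at h
    omega

theorem aux_inr (e : piI ≃g piI) (f : {f : Finset (Fin 6) // f ∈ faces}) :
    ∃ g : {f : Finset (Fin 6) // f ∈ faces}, e (Sum.inr f) = Sum.inr g := by
  have h := e.degree_eq (Sum.inr f)
  rcases hx : e (Sum.inr f) with w | g
  · rw [hx, aux_deg_inl, aux_deg_inr] at h
    omega
  · exact ⟨g, rfl⟩

theorem aux_card : ∀ f ∈ faces, f.card = 3 := by decide +kernel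

noncomputable def auxPerm (e : piI ≃g piI) (v : Fin 6) : Fin 6 := (aux_inl e v).choose

theorem auxPerm_spec (e : piI ≃g piI) (v : Fin 6) : e (Sum.inl v) = Sum.inl (auxPerm e v) :=
  (aux_inl e v).choose_spec

theorem auxPerm_inj (e : piI ≃g piI) : Function.Injective (auxPerm e) := by
  intro a b h
  have : e (Sum.inl a) = e (Sum.inl b) := by rw [auxPerm_spec, auxPerm_spec, h]
  exact Sum.inl_injective (e.injective this)

theorem aux_mem (e : piI ≃g piI) {f g : {f : Finset (Fin 6) // f ∈ faces}}
    (h : e (Sum.inr f) = Sum.inr g) (v : Fin 6) : v ∈ f.1 ↔ auxPerm e v ∈ g.1 := by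
  rw [← aux_adj, ← aux_adj, ← h, ← auxPerm_spec, e.map_adj_iff]

theorem aux_image (e : piI ≃g piI) (f : Finset (Fin 6)) (hf : f ∈ faces) :
    f.image (auxPerm e) ∈ faces := by
  obtain ⟨g, hg⟩ := aux_inr e ⟨f, hf⟩
  have : f.image (auxPerm e) = g.1 := by
    apply Finset.eq_of_subset_of_card_le
    · intro x hx
      obtain ⟨v, hv, rfl⟩ := Finset.mem_image.1 hx
      exact (aux_mem e hg v).1 hv
    · rw [Finset.card_image_of_injective _ (auxPerm_inj e), aux_card f hf, aux_card _ g.2]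
  rw [this]
  exact g.2

theorem aux_fix (e : piI ≃g piI) (h0 : auxPerm e 0 = 0) (h1 : auxPerm e 1 = 1)
    (h2 : auxPerm e 2 = 2) (x : V16) : e x = x := by
  have k3 : auxPerm e 3 = 3 := by
    have h := aux_image e {0,2,3} (by decide)
    simp only [Finset.image_insert, Finset.image_singleton, h0, h2] at h
    have hn : auxPerm e 3 ≠ 1 := fun h' => absurd (auxPerm_inj e (h'.trans h1.symm)) (by decide)
    revert h hn
    generalize auxPerm e 3 = y
    revert y
    decide +kernel
  have k5 : auxPerm e 5 = 5 := by
    have h := aux_image e {0,5,1} (by decide)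
    simp only [Finset.image_insert, Finset.image_singleton, h0, h1] at h
    have hn : auxPerm e 5 ≠ 2 := fun h' => absurd (auxPerm_inj e (h'.trans h2.symm)) (by decide)
    revert h hn
    generalize auxPerm e 5 = y
    revert y
    decide +kernel
  have k4 : auxPerm e 4 = 4 := by
    have h := aux_image e {0,3,4} (by decide)
    simp only [Finset.image_insert, Finset.image_singleton, h0, k3] at h
    have hn : auxPerm e 4 ≠ 2 := fun h' => absurd (auxPerm_inj e (h'.trans h2.symm)) (by decide)
    revert h hn
    generalize auxPerm e 4 = y
    revert y
    decide +kernel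
  have hall : ∀ v, auxPerm e v = v := by
    intro v
    fin_cases v <;> assumption
  rcases x with v | f
  · rw [auxPerm_spec, hall]
  · obtain ⟨g, hg⟩ := aux_inr e f
    rw [hg]
    congr 1
    apply Subtype.ext
    ext v
    rw [aux_mem e hg v, hall]

theorem aux_count : ((Finset.univ : Finset (Fin 6 × Fin 6 × Fin 6)).filter
    (fun t => ({t.1, t.2.1, t.2.2} : Finset (Fin 6)) ∈ faces)).card ≤ 60 := by
  decide +kernel

/-- The automorphism group of `Π_I` has at most 60 elements. -/
theorem stmt_6 : Nat.card (piI ≃g piI) ≤ 60 := by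
  let T := (Finset.univ : Finset (Fin 6 × Fin 6 × Fin 6)).filter
    (fun t => ({t.1, t.2.1, t.2.2} : Finset (Fin 6)) ∈ faces)
  let F : (piI ≃g piI) → T := fun e => ⟨(auxPerm e 0, auxPerm e 1, auxPerm e 2), by
    have h := aux_image e {0,1,2} (by decide)
    simpa [T, Finset.image_insert] using h⟩
  have hF : Function.Injective F := by
    intro e₁ e₂ h
    have h' := congrArg Subtype.val h
    simp only [F, Prod.mk.injEq] at h'
    obtain ⟨h0, h1, h2⟩ := h'
    have key : ∀ v, auxPerm e₁ v = auxPerm e₂ v → auxPerm (e₁.trans e₂.symm) v = v := by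
      intro v hv
      have : (e₁.trans e₂.symm) (Sum.inl v) = Sum.inl v := by
        change e₂.symm (e₁ (Sum.inl v)) = Sum.inl v
        rw [auxPerm_spec, hv, ← auxPerm_spec]
        exact e₂.symm_apply_apply _
      rw [auxPerm_spec] at this
      exact Sum.inl_injective this
    have hx := aux_fix (e₁.trans e₂.symm) (key 0 h0) (key 1 h1) (key 2 h2)
    apply RelIso.ext
    intro x
    have h3 : e₂.symm (e₁ x) = x := hx x
    calc e₁ x = e₂ (e₂.symm (e₁ x)) := (e₂.apply_symm_apply _).symm
      _ = e₂ x := by rw [h3]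
  calc Nat.card (piI ≃g piI) ≤ Nat.card T := Nat.card_le_card_of_injective F hF
    _ = T.card := by simp
    _ ≤ 60 := aux_count
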